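/- arXiv:1103.0741 — 3 statements merged into one kernel-verified Lean document; each statement's English description precedes it below -/
import Mathlib

section
/- There is a constant c > 0 such that the following holds. Let p satisfy c·(log n)/n ≤ p ≤ 1 and let G be a random graph distributed as G_{n,p}. Then with probability at least 1 − 1/n², for every set I ⊆ [n] with 1 ≤ |I| ≤ n/2 it holds that |N_G(I)| ≥ min{ |I|·n·p/c , n/c }. -/
open Finset MeasureTheory

noncomputable section

/-- Out-neighborhood `N_G(I)` of a set of nodes `I`. -/
def nbhd {n : ℕ} (G : SimpleGraph (Fin n)) (I : Finset (Fin n)) : Finset (Fin n) := by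
  classical exact Finset.univ.filter (fun v => v ∉ I ∧ ∃ u ∈ I, G.Adj u v)

/-- The informed sets of the flooding process on the graph sequence `Gs` with source `s`. -/
def informed {n : ℕ} (Gs : ℕ → SimpleGraph (Fin n)) (s : Fin n) : ℕ → Finset (Fin n)
  | 0 => {s}
  | t + 1 => informed Gs s t ∪ nbhd (Gs t) (informed Gs s t)

/-- `G` is an `(h,k)`-expander: every nonempty set of at most `h` nodes has
out-neighborhood of size at least `k` times its size. -/
def IsExpander {n : ℕ} (G : SimpleGraph (Fin n)) (h k : ℝ) : Prop :=
  ∀ I : Finset (Fin n), I.Nonempty → (I.card : ℝ) ≤ h →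
    k * (I.card : ℝ) ≤ ((nbhd G I).card : ℝ)

/-- Euclidean distance in the plane. -/
def euclDist (x y : ℝ × ℝ) : ℝ := Real.sqrt ((x.1 - y.1) ^ 2 + (x.2 - y.2) ^ 2)

/-- The grid `L_{n,ε}` of points `(iε, jε)`, `i, j ∈ ℕ`, `i, j ≤ √n/ε`. -/
def grid (n : ℕ) (ε : ℝ) : Finset (ℝ × ℝ) :=
  (Finset.range (⌊Real.sqrt n / ε⌋₊ + 1) ×ˢ Finset.range (⌊Real.sqrt n / ε⌋₊ + 1)).image
    (fun q => ((q.1 : ℝ) * ε, (q.2 : ℝ) * ε))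

/-- `Γ(x)`: grid points within (move) radius `r` of `x`. -/
def gamma (n : ℕ) (ε r : ℝ) (x : ℝ × ℝ) : Finset (ℝ × ℝ) := by
  classical exact (grid n ε).filter (fun y => euclDist x y ≤ r)

/-- The stationary distribution `π(x) = |Γ(x)| / Σ_y |Γ(y)|` of node positions. -/
def statDist (n : ℕ) (ε r : ℝ) (x : ℝ × ℝ) : ℝ :=
  if x ∈ grid n ε then
    ((gamma n ε r x).card : ℝ) / (∑ y ∈ grid n ε, ((gamma n ε r y).card : ℝ))
  else 0

/-- The `n` random positions `P` are independent, each distributed according to `π`. -/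
def IsIIDStationary (n : ℕ) (ε r : ℝ) {Ω : Type} [MeasurableSpace Ω] (μ : Measure Ω)
    (P : Ω → Fin n → ℝ × ℝ) : Prop :=
  ∀ f : Fin n → ℝ × ℝ, μ {ω | P ω = f} = ENNReal.ofReal (∏ i, statDist n ε r (f i))

/-- Number of cells per side: `m = ⌈√(5n)/R⌉`. -/
def numCells (n : ℕ) (R : ℝ) : ℕ := ⌈Real.sqrt (5 * n) / R⌉₊

/-- Side length of a cell. -/
def cellLen (n : ℕ) (R : ℝ) : ℝ := Real.sqrt n / (numCells n R : ℝ)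

/-- Membership of a point `x` in cell `(i,j)` of the `m × m` partition of the square
`[0,√n]²` (cells are half-open, except that the last row/column is closed above,
points of the square being below `√n` anyway). -/
def inCell (n : ℕ) (R : ℝ) (i j : ℕ) (x : ℝ × ℝ) : Prop :=
  ((i : ℝ) * cellLen n R ≤ x.1 ∧ (x.1 < ((i : ℝ) + 1) * cellLen n R ∨ i + 1 = numCells n R)) ∧
  ((j : ℝ) * cellLen n R ≤ x.2 ∧ (x.2 < ((j : ℝ) + 1) * cellLen n R ∨ j + 1 = numCells n R))

/-- The number of nodes whose positions (given by `p`) lie in cell `(i,j)`. -/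
def cellCount (n : ℕ) (R : ℝ) (p : Fin n → ℝ × ℝ) (i j : ℕ) : ℕ := by
  classical exact (Finset.univ.filter fun v => inCell n R i j (p v)).card

/-- The geometric graph: an edge between distinct `u, v` iff their positions are at
Euclidean distance at most `R`. -/
def geoGraph (n : ℕ) (R : ℝ) (p : Fin n → ℝ × ℝ) : SimpleGraph (Fin n) :=
  SimpleGraph.fromRel (fun u v => euclDist (p u) (p v) ≤ R)

/-- `x` lies in the square `[0,√n]²`. -/
def inSquare (n : ℕ) (x : ℝ × ℝ) : Prop :=
  0 ≤ x.1 ∧ x.1 ≤ Real.sqrt n ∧ 0 ≤ x.2 ∧ x.2 ≤ Real.sqrt n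

/-- The random graph `G` is distributed as the Erdős–Rényi graph `G_{n,p}`. -/
def IsErdosRenyi {n : ℕ} {Ω : Type} [MeasurableSpace Ω] (μ : Measure Ω)
    (G : Ω → SimpleGraph (Fin n)) (p : ℝ) : Prop :=
  ∀ H : SimpleGraph (Fin n),
    μ {ω | G ω = H} =
      ENNReal.ofReal (p ^ (Nat.card H.edgeSet) * (1 - p) ^ (n.choose 2 - Nat.card H.edgeSet))



theorem er_mem_nbhd {n : ℕ} (G : SimpleGraph (Fin n)) (I : Finset (Fin n)) (v : Fin n) :
    v ∈ nbhd G I ↔ v ∉ I ∧ ∃ u ∈ I, G.Adj u v := by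
  simp [nbhd]

/-- weight of a graph -/
def erW {n : ℕ} (p : ℝ) (H : SimpleGraph (Fin n)) : ℝ :=
  p ^ (Nat.card H.edgeSet) * (1 - p) ^ (n.choose 2 - Nat.card H.edgeSet)

theorem erW_nonneg {n : ℕ} {p : ℝ} (h0 : 0 ≤ p) (h1 : p ≤ 1) (H : SimpleGraph (Fin n)) :
    0 ≤ erW p H := by
  unfold erW
  have : 0 ≤ 1 - p := by linarith
  positivity

open Classical in
theorem er_avoid {n : ℕ} {p : ℝ} (h0 : 0 ≤ p) (h1 : p ≤ 1) (F : Finset (Sym2 (Fin n)))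
    (hF : F ⊆ (⊤ : SimpleGraph (Fin n)).edgeFinset) :
    ∑ H ∈ (Finset.univ : Finset (SimpleGraph (Fin n))).filter
      (fun H => Disjoint H.edgeFinset F), erW p H ≤ (1 - p) ^ F.card := by
  have h1' : 0 ≤ 1 - p := by linarith
  set E := (⊤ : SimpleGraph (Fin n)).edgeFinset with hE
  have hEc : E.card = n.choose 2 := by
    rw [hE, SimpleGraph.card_edgeFinset_top_eq_card_choose_two, Fintype.card_fin]
  have e1 : ∑ H ∈ (Finset.univ : Finset (SimpleGraph (Fin n))).filter
      (fun H => Disjoint H.edgeFinset F), erW p H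
      = ∑ S ∈ ((Finset.univ : Finset (SimpleGraph (Fin n))).filter
      (fun H => Disjoint H.edgeFinset F)).image (fun H => H.edgeFinset),
        p ^ S.card * (1 - p) ^ (n.choose 2 - S.card) := by
    rw [Finset.sum_image]
    · apply Finset.sum_congr rfl
      intro H _
      unfold erW
      rw [Nat.card_eq_fintype_card, ← SimpleGraph.edgeFinset_card]
    · intro a _ b _ hab
      exact SimpleGraph.edgeFinset_inj.1 hab
  rw [e1]
  calc _ ≤ ∑ S ∈ (E \ F).powerset, p ^ S.card * (1 - p) ^ (n.choose 2 - S.card) := by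
        apply Finset.sum_le_sum_of_subset_of_nonneg
        · intro S hS
          simp only [Finset.mem_image, Finset.mem_filter, Finset.mem_univ, true_and] at hS
          obtain ⟨H, hH, rfl⟩ := hS
          rw [Finset.mem_powerset, Finset.subset_sdiff]
          refine ⟨?_, hH⟩
          exact SimpleGraph.edgeFinset_mono le_top
        · intros; positivity
    _ = ∑ S ∈ (E \ F).powerset, (p ^ S.card * (1 - p) ^ ((E \ F).card - S.card)) * (1 - p) ^ F.card := by
        apply Finset.sum_congr rfl
        intro S hS
        rw [mul_assoc, ← pow_add]
        congr 2
        have := Finset.card_le_card (Finset.mem_powerset.1 hS)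
        have h2 := Finset.card_sdiff_add_card_eq_card hF
        omega
    _ = (1 - p) ^ F.card := by
        rw [← Finset.sum_mul, Finset.sum_pow_mul_eq_add_pow]
        simp

open Classical in
theorem er_avoid_nbhd {n : ℕ} {p : ℝ} (h0 : 0 ≤ p) (h1 : p ≤ 1) (I T : Finset (Fin n))
    (hT : T ⊆ Iᶜ) :
    ∑ H : SimpleGraph (Fin n), erW p H * (∏ v ∈ T, if v ∈ nbhd H I then (0:ℝ) else 1)
      ≤ ((1 - p) ^ I.card) ^ T.card := by
  have hd : ∀ v ∈ T, v ∉ I := fun v hv => by simpa using hT hv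
  set F : Finset (Sym2 (Fin n)) := (I ×ˢ T).image (fun q => s(q.1, q.2)) with hF
  have hFc : F.card = I.card * T.card := by
    rw [hF, Finset.card_image_of_injOn, Finset.card_product]
    rintro ⟨a, b⟩ hab ⟨c, d⟩ hcd h
    simp only [Finset.coe_product, Set.mem_prod, Finset.mem_coe] at hab hcd
    simp only [Sym2.eq_iff] at h
    rcases h with ⟨rfl, rfl⟩ | ⟨rfl, rfl⟩
    · rfl
    · exact absurd hab.1 (hd _ hcd.2)
  have hFE : F ⊆ (⊤ : SimpleGraph (Fin n)).edgeFinset := by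
    intro e he
    simp only [hF, Finset.mem_image, Finset.mem_product, Prod.exists] at he
    obtain ⟨a, b, ⟨ha, hb⟩, rfl⟩ := he
    simp only [SimpleGraph.mem_edgeFinset, SimpleGraph.mem_edgeSet, SimpleGraph.top_adj]
    rintro rfl
    exact hd _ hb ha
  rw [← pow_mul, ← hFc]
  refine le_trans (le_of_eq ?_) (er_avoid h0 h1 F hFE)
  rw [Finset.sum_filter]
  apply Finset.sum_congr rfl
  intro H _
  split_ifs with h
  · rw [Finset.prod_eq_one, mul_one]
    intro v hv
    rw [if_neg]
    rw [er_mem_nbhd]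
    rintro ⟨_, u, hu, huv⟩
    refine Finset.disjoint_left.1 h (show s(u, v) ∈ H.edgeFinset by simpa using huv) ?_
    exact Finset.mem_image.2 ⟨(u, v), Finset.mem_product.2 ⟨hu, hv⟩, rfl⟩
  · rw [Finset.not_disjoint_iff] at h
    obtain ⟨e, he, heF⟩ := h
    simp only [hF, Finset.mem_image, Finset.mem_product, Prod.exists] at heF
    obtain ⟨a, b, ⟨ha, hb⟩, rfl⟩ := heF
    rw [Finset.prod_eq_zero hb, mul_zero]
    rw [if_pos]
    rw [er_mem_nbhd]
    exact ⟨hd _ hb, a, ha, by simpa using he⟩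

open Classical in
theorem er_mgf {n : ℕ} {p x : ℝ} (h0 : 0 ≤ p) (h1 : p ≤ 1) (hx0 : 0 ≤ x) (hx1 : x ≤ 1)
    (I : Finset (Fin n)) :
    ∑ H : SimpleGraph (Fin n), erW p H * x ^ (nbhd H I).card
      ≤ ((1 - x) * (1 - p) ^ I.card + x) ^ (n - I.card) := by
  have hx1' : 0 ≤ 1 - x := by linarith
  have key : ∀ H : SimpleGraph (Fin n), x ^ (nbhd H I).card =
      ∑ T ∈ (Iᶜ).powerset, (∏ v ∈ T, if v ∈ nbhd H I then (0:ℝ) else 1) *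
        ((1 - x) ^ T.card * x ^ ((Iᶜ).card - T.card)) := by
    intro H
    have e : x ^ (nbhd H I).card = ∏ v ∈ Iᶜ, ((1 - x) * (if v ∈ nbhd H I then (0:ℝ) else 1) + x) := by
      have : ∀ v, ((1 - x) * (if v ∈ nbhd H I then (0:ℝ) else 1) + x)
          = if v ∈ nbhd H I then x else 1 := by
        intro v; split_ifs <;> ring
      simp_rw [this]
      rw [← Finset.prod_filter, Finset.prod_const]
      congr 2
      ext v
      simp only [Finset.mem_filter, Finset.mem_compl, er_mem_nbhd]
      tauto
    rw [e, Finset.prod_add]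
    apply Finset.sum_congr rfl
    intro T hT
    rw [Finset.prod_mul_distrib, Finset.prod_const, Finset.prod_const,
      Finset.card_sdiff_of_subset (Finset.mem_powerset.1 hT)]
    ring
  simp_rw [key, Finset.mul_sum]
  rw [Finset.sum_comm]
  have hc : n - I.card = (Iᶜ).card := by rw [Finset.card_compl, Fintype.card_fin]
  rw [hc, ← Finset.sum_pow_mul_eq_add_pow]
  apply Finset.sum_le_sum
  intro T hT
  simp_rw [← mul_assoc]
  rw [← Finset.sum_mul, ← Finset.sum_mul, mul_pow]
  have := er_avoid_nbhd h0 h1 I T (Finset.mem_powerset.1 hT)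
  have h2 : 0 ≤ (1 - x) ^ T.card := by positivity
  have h3 : 0 ≤ x ^ ((Iᶜ).card - T.card) := by positivity
  apply mul_le_mul_of_nonneg_right _ h3
  rw [mul_comm]
  exact mul_le_mul_of_nonneg_left this h2

open Classical in
theorem er_tail {n : ℕ} {p a s : ℝ} (h0 : 0 ≤ p) (h1 : p ≤ 1) (ha : 0 ≤ a)
    (I : Finset (Fin n)) :
    ∑ H ∈ (Finset.univ : Finset (SimpleGraph (Fin n))).filter
      (fun H => ((nbhd H I).card : ℝ) < s), erW p H
      ≤ Real.exp (a * s) *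
        ((1 - Real.exp (-a)) * (1 - p) ^ I.card + Real.exp (-a)) ^ (n - I.card) := by
  have := er_mgf h0 h1 (Real.exp_nonneg (-a)) (Real.exp_le_one_iff.2 (by linarith)) I
  refine le_trans ?_ (mul_le_mul_of_nonneg_left this (Real.exp_nonneg (a * s)))
  rw [Finset.sum_filter, Finset.mul_sum]
  apply Finset.sum_le_sum
  intro H _
  have hw := erW_nonneg h0 h1 H
  split_ifs with h
  · rw [← Real.exp_nat_mul]
    rw [mul_left_comm, ← Real.exp_add]
    have : 1 ≤ Real.exp (a * s + ((nbhd H I).card : ℝ) * -a) := by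
      apply Real.one_le_exp
      nlinarith
    nlinarith
  · positivity

open Classical in
theorem er_tail2 {n : ℕ} {p : ℝ} (h0 : 0 ≤ p) (h1 : p ≤ 1)
    (I : Finset (Fin n)) (hI : (I.card : ℝ) ≤ (n : ℝ) / 2) :
    ∑ H ∈ (Finset.univ : Finset (SimpleGraph (Fin n))).filter
      (fun H => ((nbhd H I).card : ℝ) < min ((I.card : ℝ) * n * p / 80) ((n : ℝ) / 80)), erW p H
      ≤ Real.exp (-(I.card * n * p / 16)) := by
  set k : ℝ := (I.card : ℝ) with hk
  have hk0 : 0 ≤ k := by positivity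
  have hn0 : (0:ℝ) ≤ n := by positivity
  have hy0 : 0 ≤ (1 - p) ^ I.card := pow_nonneg (by linarith) _
  have hy : (1 - p) ^ I.card ≤ Real.exp (-(k * p)) := by
    calc (1 - p) ^ I.card ≤ (Real.exp (-p)) ^ I.card := by
          apply pow_le_pow_left₀ (by linarith)
          have := Real.add_one_le_exp (-p); linarith
      _ = _ := by rw [← Real.exp_nat_mul]; congr 1; ring
  have hkn : I.card ≤ n := by
    have := Finset.card_le_univ I
    simpa using this
  have hm : ((n - I.card : ℕ) : ℝ) = n - k := by rw [Nat.cast_sub hkn]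
  have hkp : 0 ≤ k * p := by positivity
  have hs1 := min_le_left (k * n * p / 80) ((n : ℝ) / 80)
  have hs2 := min_le_right (k * n * p / 80) ((n : ℝ) / 80)
  set s := min (k * n * p / 80) ((n : ℝ) / 80)
  have hknp : 0 ≤ k * p * n := by positivity
  rcases le_or_gt (k * p) 1 with hc | hc
  · refine (er_tail h0 h1 (a := Real.log 2) (s := s) (Real.log_nonneg (by norm_num)) I).trans ?_
    have e2 : Real.exp (-Real.log 2) = 1 / 2 := by
      rw [Real.exp_neg, Real.exp_log (by norm_num)]; norm_num
    rw [e2]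
    have hb : (1 - 1 / 2) * (1 - p) ^ I.card + 1 / 2 ≤ Real.exp (-(k * p / 4)) := by
      have h3 : Real.exp (-(k * p)) ≤ 1 - k * p / 2 := by
        rw [Real.exp_neg]
        have := Real.add_one_le_exp (k * p)
        rw [inv_le_comm₀ (Real.exp_pos _) (by linarith)]
        refine le_trans ?_ this
        rw [inv_le_comm₀ (by linarith) (by linarith), ← one_div, div_le_iff₀ (by linarith)]
        nlinarith
      have := Real.add_one_le_exp (-(k * p / 4))
      linarith
    have hb2 : ((1 - 1 / 2) * (1 - p) ^ I.card + 1 / 2) ^ (n - I.card)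
        ≤ Real.exp ((n - k) * -(k * p / 4)) := by
      rw [← hm, Real.exp_nat_mul]
      exact pow_le_pow_left₀ (by linarith) hb _
    refine (mul_le_mul_of_nonneg_left hb2 (Real.exp_nonneg _)).trans ?_
    rw [← Real.exp_add]
    apply Real.exp_le_exp.2
    have hl : Real.log 2 ≤ 1 := by linarith [Real.log_two_lt_d9]
    have hl0 : 0 ≤ Real.log 2 := Real.log_nonneg (by norm_num)
    have q1 : Real.log 2 * s ≤ k * n * p / 80 := by
      have : Real.log 2 * s ≤ Real.log 2 * (k * n * p / 80) := mul_le_mul_of_nonneg_left hs1 hl0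
      nlinarith
    have q2 : (n / 2) * (k * p / 4) ≤ (n - k) * (k * p / 4) :=
      mul_le_mul_of_nonneg_right (by linarith) (by positivity)
    nlinarith
  · refine (er_tail h0 h1 (a := k * p) (s := s) hkp I).trans ?_
    have hb : (1 - Real.exp (-(k * p))) * (1 - p) ^ I.card + Real.exp (-(k * p))
        ≤ Real.exp (-(3 / 10 * (k * p))) := by
      have h3 : (1 - Real.exp (-(k * p))) * (1 - p) ^ I.card ≤ Real.exp (-(k * p)) := by
        have := Real.exp_pos (-(k * p))
        nlinarith
      have h4 : 2 * Real.exp (-(k * p)) ≤ Real.exp (-(3 / 10 * (k * p))) := by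
        have : (2:ℝ) = Real.exp (Real.log 2) := (Real.exp_log (by norm_num)).symm
        rw [this, ← Real.exp_add]
        apply Real.exp_le_exp.2
        linarith [Real.log_two_lt_d9]
      linarith
    have hb0 : 0 ≤ (1 - Real.exp (-(k * p))) * (1 - p) ^ I.card + Real.exp (-(k * p)) := by
      have : 0 ≤ 1 - Real.exp (-(k * p)) := by
        have := Real.exp_le_one_iff.2 (show -(k * p) ≤ 0 by linarith)
        linarith
      positivity
    have hb2 : ((1 - Real.exp (-(k * p))) * (1 - p) ^ I.card + Real.exp (-(k * p))) ^ (n - I.card)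
        ≤ Real.exp ((n - k) * -(3 / 10 * (k * p))) := by
      rw [← hm, Real.exp_nat_mul]
      exact pow_le_pow_left₀ hb0 hb _
    refine (mul_le_mul_of_nonneg_left hb2 (Real.exp_nonneg _)).trans ?_
    rw [← Real.exp_add]
    apply Real.exp_le_exp.2
    have q1 : k * p * s ≤ k * p * (n / 80) := mul_le_mul_of_nonneg_left hs2 hkp
    have q2 : (n / 2) * (3 / 10 * (k * p)) ≤ (n - k) * (3 / 10 * (k * p)) :=
      mul_le_mul_of_nonneg_right (by linarith) (by positivity)
    nlinarith

open Classical in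
theorem er_sum_biUnion {α β : Type} (A : Finset α) (g : α → Finset β) (w : β → ℝ)
    (hw : ∀ b, 0 ≤ w b) : ∑ b ∈ A.biUnion g, w b ≤ ∑ a ∈ A, ∑ b ∈ g a, w b := by
  induction A using Finset.induction_on with
  | empty => simp
  | insert a A ha ih =>
    rw [Finset.biUnion_insert, Finset.sum_insert ha]
    have := Finset.sum_union_inter (s₁ := g a) (s₂ := A.biUnion g) (f := w)
    have h2 : 0 ≤ ∑ b ∈ g a ∩ A.biUnion g, w b := Finset.sum_nonneg (fun b _ => hw b)
    linarith

open Classical in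
theorem er_union {n : ℕ} {p : ℝ} (hn : 2 ≤ n) (h0 : 80 * Real.log n / n ≤ p) (h1 : p ≤ 1) :
    ∑ H ∈ (Finset.univ : Finset (SimpleGraph (Fin n))).filter
      (fun H => ¬ ∀ I : Finset (Fin n), I.Nonempty → (I.card : ℝ) ≤ (n : ℝ) / 2 →
            min ((I.card : ℝ) * n * p / 80) ((n : ℝ) / 80) ≤ ((nbhd H I).card : ℝ)), erW p H
      ≤ 1 / (n : ℝ) ^ 2 := by
  have hn' : (2:ℝ) ≤ n := by exact_mod_cast hn
  have hl : 0 ≤ Real.log n := Real.log_nonneg (by linarith)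
  have hp : 0 ≤ p := le_trans (by positivity) h0
  have hnp : 80 * Real.log n ≤ n * p := by
    rw [div_le_iff₀ (by linarith)] at h0; linarith
  set t : ℝ := 1 / (n:ℝ) ^ 5 with ht
  have ht0 : 0 ≤ t := by positivity
  have hexp : ∀ I : Finset (Fin n), Real.exp (-(I.card * n * p / 16)) ≤ t ^ I.card := by
    intro I
    have : t = Real.exp (-(5 * Real.log n)) := by
      rw [ht, Real.exp_neg, one_div]
      congr 1
      rw [show (5:ℝ) = ((5:ℕ):ℝ) by norm_num, Real.exp_nat_mul, Real.exp_log (by linarith)]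
    rw [this, ← Real.exp_nat_mul]
    apply Real.exp_le_exp.2
    have : (0:ℝ) ≤ I.card := by positivity
    nlinarith
  set A : Finset (Finset (Fin n)) := Finset.univ.filter
    (fun I => I.Nonempty ∧ (I.card : ℝ) ≤ (n : ℝ) / 2)
  calc _ ≤ ∑ H ∈ A.biUnion (fun I => (Finset.univ : Finset (SimpleGraph (Fin n))).filter
      (fun H => ((nbhd H I).card : ℝ) < min ((I.card : ℝ) * n * p / 80) ((n : ℝ) / 80))), erW p H := by
        apply Finset.sum_le_sum_of_subset_of_nonneg
        · intro H hH
          simp only [Finset.mem_filter, Finset.mem_univ, true_and] at hH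
          push Not at hH
          obtain ⟨I, hI1, hI2, hI3⟩ := hH
          simp only [Finset.mem_biUnion, Finset.mem_filter, Finset.mem_univ, true_and, A]
          exact ⟨I, ⟨hI1, hI2⟩, hI3⟩
        · intro H _ _
          exact erW_nonneg hp h1 H
    _ ≤ ∑ I ∈ A, ∑ H ∈ (Finset.univ : Finset (SimpleGraph (Fin n))).filter
      (fun H => ((nbhd H I).card : ℝ) < min ((I.card : ℝ) * n * p / 80) ((n : ℝ) / 80)), erW p H := by
        exact er_sum_biUnion A _ _ (fun H => erW_nonneg hp h1 H)
    _ ≤ ∑ I ∈ A, t ^ I.card := by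
        apply Finset.sum_le_sum
        intro I hI
        exact (er_tail2 hp h1 I (Finset.mem_filter.1 hI).2.2).trans (hexp I)
    _ ≤ ∑ I ∈ (Finset.univ : Finset (Finset (Fin n))).erase ∅, t ^ I.card := by
        apply Finset.sum_le_sum_of_subset_of_nonneg
        · intro I hI
          have := (Finset.mem_filter.1 hI).2.1
          simp [this.ne_empty]
        · intros; positivity
    _ = (1 + t) ^ n - 1 := by
        have := Finset.sum_pow_mul_eq_add_pow t (1:ℝ) (Finset.univ : Finset (Fin n))
        simp only [one_pow, mul_one, Finset.powerset_univ, Finset.card_univ, Fintype.card_fin] at this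
        rw [← Finset.add_sum_erase _ _ (Finset.mem_univ ∅)] at this
        simp only [Finset.card_empty, pow_zero] at this
        rw [add_comm 1 t]
        linarith
    _ ≤ 2 * (n * t) := by
        have hnt : (n:ℝ) * t = 1 / (n:ℝ) ^ 4 := by rw [ht]; field_simp
        have h4 : (n:ℝ) * t ≤ 1 / 2 := by
          rw [hnt]
          apply one_div_le_one_div_of_le (by norm_num)
          have : (2:ℝ) ^ 4 ≤ (n:ℝ) ^ 4 := pow_le_pow_left₀ (by norm_num) hn' 4
          linarith
        have h5 : (1 + t) ^ n ≤ Real.exp (n * t) := by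
          rw [Real.exp_nat_mul]
          apply pow_le_pow_left₀ (by linarith)
          have := Real.add_one_le_exp t; linarith
        have h6 : Real.exp (n * t) ≤ 1 / (1 - n * t) := by
          have := Real.add_one_le_exp (-(n * t))
          rw [Real.exp_neg] at this
          rw [le_div_iff₀ (by linarith)]
          have h7 := Real.exp_pos (n * t)
          calc Real.exp (n * t) * (1 - n * t) ≤ Real.exp (n * t) * (Real.exp (n * t))⁻¹ :=
                mul_le_mul_of_nonneg_left (by linarith) h7.le
            _ = 1 := mul_inv_cancel₀ h7.ne'
        have h8 : 1 / (1 - n * t) ≤ 1 + 2 * (n * t) := by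
          rw [div_le_iff₀ (by linarith)]
          have : 0 ≤ n * t := by positivity
          nlinarith
        linarith
    _ ≤ 1 / (n:ℝ) ^ 2 := by
        rw [ht, show 2 * ((n:ℝ) * (1 / (n:ℝ) ^ 5)) = (2 / (n:ℝ) ^ 2) * (1 / (n:ℝ) ^ 2) by field_simp]
        have : 2 / (n:ℝ) ^ 2 ≤ 1 := by
          rw [div_le_one (by positivity)]; nlinarith
        have h2 : 0 ≤ 1 / (n:ℝ) ^ 2 := by positivity
        nlinarith

/-- neighborhood expansion of the Erdős–Rényi graph `G_{n,p}`. -/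
theorem er_neighborhood_expansion :
    ∃ c : ℝ, 0 < c ∧
      ∀ (n : ℕ) (p : ℝ) (Ω : Type) [MeasurableSpace Ω] (μ : Measure Ω)
        [IsProbabilityMeasure μ] (G : Ω → SimpleGraph (Fin n)),
        2 ≤ n → c * Real.log n / n ≤ p → p ≤ 1 →
        IsErdosRenyi μ G p →
        ENNReal.ofReal (1 - 1 / (n : ℝ) ^ 2) ≤
          μ {ω | ∀ I : Finset (Fin n), I.Nonempty → (I.card : ℝ) ≤ (n : ℝ) / 2 →
            min ((I.card : ℝ) * n * p / c) ((n : ℝ) / c) ≤ ((nbhd (G ω) I).card : ℝ)} := by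
  classical
  refine ⟨80, by norm_num, ?_⟩
  intro n p Ω _ μ _ G hn hp h1 hG
  have hn' : (2:ℝ) ≤ n := by exact_mod_cast hn
  have hp0 : 0 ≤ p := le_trans (div_nonneg (mul_nonneg (by norm_num)
    (Real.log_nonneg (by linarith))) (by linarith)) hp
  have hU := er_union hn hp h1
  set B : Finset (SimpleGraph (Fin n)) := Finset.univ.filter
      (fun H => ¬ ∀ I : Finset (Fin n), I.Nonempty → (I.card : ℝ) ≤ (n : ℝ) / 2 →
            min ((I.card : ℝ) * n * p / 80) ((n : ℝ) / 80) ≤ ((nbhd H I).card : ℝ)) with hB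
  set E : Set Ω := {ω | ∀ I : Finset (Fin n), I.Nonempty → (I.card : ℝ) ≤ (n : ℝ) / 2 →
            min ((I.card : ℝ) * n * p / 80) ((n : ℝ) / 80) ≤ ((nbhd (G ω) I).card : ℝ)} with hE
  have hEc : μ Eᶜ ≤ ENNReal.ofReal (1 / (n:ℝ) ^ 2) := by
    calc μ Eᶜ ≤ μ (⋃ H ∈ B, {ω | G ω = H}) := by
          apply measure_mono
          intro ω hω
          simp only [Set.mem_iUnion, Set.mem_ofPred_eq, exists_prop]
          refine ⟨G ω, ?_, rfl⟩
          rw [hB, Finset.mem_filter]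
          exact ⟨Finset.mem_univ _, hω⟩
      _ ≤ ∑ H ∈ B, μ {ω | G ω = H} := measure_biUnion_finset_le _ _
      _ = ∑ H ∈ B, ENNReal.ofReal (erW p H) := Finset.sum_congr rfl (fun H _ => hG H)
      _ = ENNReal.ofReal (∑ H ∈ B, erW p H) :=
          (ENNReal.ofReal_sum_of_nonneg (fun H _ => erW_nonneg hp0 h1 H)).symm
      _ ≤ _ := ENNReal.ofReal_le_ofReal hU
  have h3 : (1 : ENNReal) ≤ μ E + μ Eᶜ := by
    rw [← measure_univ (μ := μ), ← Set.union_compl_self E]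
    exact measure_union_le _ _
  rw [ENNReal.ofReal_sub _ (by positivity), ENNReal.ofReal_one]
  exact tsub_le_iff_right.2 (h3.trans (add_le_add le_rfl hEc))

end
end

section
/- There is a constant c > 0 such that the following holds. Let p̂ satisfy c·(log n)/n ≤ p̂ ≤ 1 and let G be a random graph distributed as G_{n,p̂} (the stationary distribution of an edge-Markovian evolving graph with birth-rate p and death-rate q, where p̂ = p/(p+q)). Then with probability at least 1 − 1/n², G is simultaneously an (h, n·p̂/c)-expander for every h with 1 ≤ h ≤ 1/p̂, and an (h, n/(c·h))-expander for every h with 1/p̂ ≤ h ≤ n/2. -/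
open Finset MeasureTheory

noncomputable section

open scoped Classical in
theorem sum_noedge {n : ℕ} {p : ℝ} (h0 : 0 ≤ p) (h1 : p ≤ 1) (I J : Finset (Fin n))
    (hIJ : Disjoint I J) :
    ∑ H : SimpleGraph (Fin n), erW p H * (if ∀ v ∈ J, v ∉ nbhd H I then 1 else 0)
      ≤ ((1 - p) ^ I.card) ^ J.card := by
  have hp : 0 ≤ 1 - p := by linarith
  set E0 : Finset (Sym2 (Fin n)) := (⊤ : SimpleGraph (Fin n)).edgeFinset with hE0
  set F : Finset (Sym2 (Fin n)) := (I ×ˢ J).image (fun q => s(q.1, q.2)) with hF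
  have hE0c : E0.card = n.choose 2 := by
    rw [hE0, SimpleGraph.card_edgeFinset_top_eq_card_choose_two]; simp
  have hdis : ∀ x ∈ I, ∀ y ∈ J, x ≠ y := fun x hx y hy => by
    rintro rfl; exact (Finset.disjoint_left.mp hIJ) hx hy
  have hFsub : F ⊆ E0 := by
    intro e he
    simp only [hF, Finset.mem_image, Finset.mem_product] at he
    obtain ⟨⟨a, b⟩, ⟨ha, hb⟩, rfl⟩ := he
    simp only [hE0, SimpleGraph.mem_edgeFinset, SimpleGraph.mem_edgeSet, SimpleGraph.top_adj]
    exact hdis a ha b hb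
  have hFc : F.card = I.card * J.card := by
    rw [hF, Finset.card_image_of_injOn, Finset.card_product]
    rintro ⟨a, b⟩ hab ⟨c, d⟩ hcd h
    simp only [Finset.coe_product, Set.mem_prod, Finset.mem_coe] at hab hcd
    simp only [Sym2.eq_iff] at h
    rcases h with ⟨rfl, rfl⟩ | ⟨rfl, rfl⟩
    · rfl
    · exact absurd rfl (hdis _ hab.1 _ hcd.2)
  have hcard : (E0 \ F).card + F.card = n.choose 2 := by
    rw [← hE0c]; exact Finset.card_sdiff_add_card_eq_card hFsub
  set A : Finset (SimpleGraph (Fin n)) := Finset.univ.filter (fun H => ∀ v ∈ J, v ∉ nbhd H I)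
  have hinj : Set.InjOn (fun H : SimpleGraph (Fin n) => H.edgeFinset) (A : Set _) := by
    intro H _ K _ h
    exact SimpleGraph.edgeFinset_inj.mp h
  have hsub : A.image (fun H : SimpleGraph (Fin n) => H.edgeFinset) ⊆ (E0 \ F).powerset := by
    intro S hS
    rw [Finset.mem_image] at hS
    obtain ⟨H, hH, rfl⟩ := hS
    rw [Finset.mem_powerset]
    intro e he
    rw [Finset.mem_sdiff]
    refine ⟨SimpleGraph.edgeFinset_mono le_top he, ?_⟩
    intro heF
    simp only [hF, Finset.mem_image, Finset.mem_product] at heF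
    obtain ⟨⟨a, b⟩, ⟨ha, hb⟩, rfl⟩ := heF
    rw [Finset.mem_filter] at hH
    refine hH.2 b hb ?_
    simp only [nbhd, Finset.mem_filter, Finset.mem_univ, true_and]
    refine ⟨fun hbI => hdis b hbI b hb rfl, a, ha, ?_⟩
    simpa using he
  calc ∑ H : SimpleGraph (Fin n), erW p H * (if ∀ v ∈ J, v ∉ nbhd H I then 1 else 0)
      = ∑ H ∈ A, erW p H := by
        rw [Finset.sum_filter]
        refine Finset.sum_congr rfl fun H _ => ?_
        split_ifs <;> simp
    _ = ∑ H ∈ A, p ^ (H.edgeFinset).card * (1 - p) ^ (n.choose 2 - (H.edgeFinset).card) := by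
        refine Finset.sum_congr rfl fun H _ => ?_
        rw [erW, Nat.card_eq_fintype_card, SimpleGraph.card_edgeSet]
    _ = ∑ S ∈ A.image (fun H : SimpleGraph (Fin n) => H.edgeFinset),
          p ^ S.card * (1 - p) ^ (n.choose 2 - S.card) := by
        rw [Finset.sum_image hinj]
    _ ≤ ∑ S ∈ (E0 \ F).powerset, p ^ S.card * (1 - p) ^ (n.choose 2 - S.card) :=
        Finset.sum_le_sum_of_subset_of_nonneg hsub (fun _ _ _ => by positivity)
    _ = ∑ S ∈ (E0 \ F).powerset,
          (p ^ S.card * (1 - p) ^ ((E0 \ F).card - S.card)) * (1 - p) ^ F.card := by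
        refine Finset.sum_congr rfl fun S hS => ?_
        have := Finset.card_le_card (Finset.mem_powerset.mp hS)
        rw [mul_assoc, ← pow_add]
        congr 2
        omega
    _ = (1 - p) ^ F.card := by
        rw [← Finset.sum_mul, Finset.sum_pow_mul_eq_add_pow]; simp
    _ = _ := by rw [hFc, pow_mul]

open scoped Classical in
theorem mgf_bound {n : ℕ} {p a : ℝ} (h0 : 0 ≤ p) (h1 : p ≤ 1) (ha0 : 0 ≤ a) (ha1 : a ≤ 1)
    (I : Finset (Fin n)) :
    ∑ H : SimpleGraph (Fin n), erW p H * a ^ (nbhd H I).card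
      ≤ ((1 - a) * (1 - p) ^ I.card + a) ^ (n - I.card) := by
  have hq : 0 ≤ 1 - a := by linarith
  have key : ∀ H : SimpleGraph (Fin n), a ^ (nbhd H I).card =
      ∑ J ∈ (Iᶜ).powerset, ((1 - a) ^ J.card * a ^ ((Iᶜ).card - J.card)) *
        (if ∀ v ∈ J, v ∉ nbhd H I then 1 else 0) := by
    intro H
    have e1 : a ^ (nbhd H I).card =
        ∏ v ∈ Iᶜ, ((if v ∉ nbhd H I then (1 - a) else 0) + a) := by
      have e2 : ∏ v ∈ Iᶜ, ((if v ∉ nbhd H I then (1 - a) else 0) + a)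
          = ∏ v ∈ Iᶜ, (if v ∈ nbhd H I then a else 1) := by
        refine Finset.prod_congr rfl fun v _ => ?_
        split_ifs <;> simp_all
      have e3 : (Iᶜ).filter (fun v => v ∈ nbhd H I) = nbhd H I := by
        ext v
        simp only [nbhd, Finset.mem_filter, Finset.mem_univ, true_and, Finset.mem_compl]
        tauto
      rw [e2, Finset.prod_ite, e3]
      simp
    rw [e1, Finset.prod_add]
    refine Finset.sum_congr rfl fun J hJ => ?_
    rw [Finset.prod_const, Finset.card_sdiff_of_subset (Finset.mem_powerset.mp hJ)]
    by_cases h : ∀ v ∈ J, v ∉ nbhd H I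
    · rw [if_pos h, Finset.prod_congr rfl (fun v hv => if_pos (h v hv)), Finset.prod_const]
      ring
    · rw [if_neg h]
      push Not at h
      obtain ⟨v, hv, hv2⟩ := h
      rw [Finset.prod_eq_zero hv (by simp [hv2])]
      ring
  calc ∑ H : SimpleGraph (Fin n), erW p H * a ^ (nbhd H I).card
      = ∑ J ∈ (Iᶜ).powerset, ((1 - a) ^ J.card * a ^ ((Iᶜ).card - J.card)) *
          ∑ H : SimpleGraph (Fin n), erW p H * (if ∀ v ∈ J, v ∉ nbhd H I then 1 else 0) := by
        simp_rw [key, Finset.mul_sum]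
        rw [Finset.sum_comm]
        refine Finset.sum_congr rfl fun J _ => Finset.sum_congr rfl fun H _ => ?_
        ring
    _ ≤ ∑ J ∈ (Iᶜ).powerset, ((1 - a) ^ J.card * a ^ ((Iᶜ).card - J.card)) *
          ((1 - p) ^ I.card) ^ J.card := by
        refine Finset.sum_le_sum fun J hJ => ?_
        refine mul_le_mul_of_nonneg_left (sum_noedge h0 h1 I J ?_) (by positivity)
        rw [Finset.disjoint_left]
        intro x hx hxJ
        exact (Finset.mem_compl.mp (Finset.mem_powerset.mp hJ hxJ)) hx
    _ = ∑ J ∈ (Iᶜ).powerset, ((1 - a) * (1 - p) ^ I.card) ^ J.card *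
          a ^ ((Iᶜ).card - J.card) := by
        refine Finset.sum_congr rfl fun J _ => ?_
        rw [mul_pow]; ring
    _ = _ := by
        rw [Finset.sum_pow_mul_eq_add_pow, Finset.card_compl, Fintype.card_fin]

theorem base_bound {x : ℝ} (hx : 0 ≤ x) :
    (1 - Real.exp (-(max 1 x))) * Real.exp (-x) + Real.exp (-(max 1 x)) ≤ Real.exp (-(x / 4)) := by
  have he1 : Real.exp (-1) ≤ 1 / 2 := by
    have := Real.add_one_le_exp (1 : ℝ)
    rw [Real.exp_neg, ← one_div]
    exact one_div_le_one_div_of_le (by norm_num) (by linarith)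
  rcases le_total x 1 with h | h
  · rw [max_eq_left h]
    have h2 : Real.exp (-x) ≤ 1 - x / 2 := by
      have hc := convexOn_exp.2 (Set.mem_univ 0) (Set.mem_univ (-1))
        (by linarith : 0 ≤ 1 - x) hx (by ring)
      simp only [smul_eq_mul, mul_zero, zero_add, Real.exp_zero, mul_one, mul_neg] at hc
      nlinarith
    have h3 := Real.add_one_le_exp (-(x / 4))
    have h4 : 0 < Real.exp (-1) := Real.exp_pos _
    nlinarith
  · rw [max_eq_right h]
    have h5 : (2 : ℝ) ≤ Real.exp (3 / 4 * x) := by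
      have := Real.quadratic_le_exp_of_nonneg (x := 3 / 4 * x) (by linarith)
      nlinarith
    have h6 : Real.exp (-(x / 4)) = Real.exp (3 / 4 * x) * Real.exp (-x) := by
      rw [← Real.exp_add]; congr 1; ring
    rw [h6]
    have h7 := Real.exp_pos (-x)
    nlinarith

open scoped Classical in
theorem bad_bound {n : ℕ} {p : ℝ} (h0 : 0 ≤ p) (h1 : p ≤ 1) (hn : 2 ≤ n)
    (hp : 80 * Real.log n / n ≤ p) (I : Finset (Fin n)) (hI : (I.card : ℝ) ≤ n / 2) :
    ∑ H ∈ Finset.univ.filter (fun H : SimpleGraph (Fin n) =>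
        ((nbhd H I).card : ℝ) < n * min (p * I.card) 1 / 80), erW p H
      ≤ (1 / (n : ℝ) ^ 5) ^ I.card := by
  have hn0 : (0 : ℝ) < n := by positivity
  set x : ℝ := p * I.card with hx
  have hx0 : 0 ≤ x := by positivity
  set l : ℝ := max 1 x with hl
  have hl0 : 0 ≤ l := le_trans zero_le_one (le_max_left _ _)
  have hlm : l * min x 1 = x := by
    rw [hl]
    rcases le_total x 1 with h | h
    · rw [max_eq_left h, min_eq_left h, one_mul]
    · rw [max_eq_right h, min_eq_right h, mul_one]
  have ha0 := Real.exp_pos (-l)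
  have ha1 : Real.exp (-l) ≤ 1 := Real.exp_le_one_iff.mpr (by linarith)
  have hcn : I.card ≤ n := by simpa using Finset.card_le_univ I
  calc _ ≤ ∑ H ∈ Finset.univ.filter (fun H : SimpleGraph (Fin n) =>
        ((nbhd H I).card : ℝ) < n * min x 1 / 80),
          Real.exp (n * x / 80) * (erW p H * Real.exp (-l) ^ (nbhd H I).card) := by
        refine Finset.sum_le_sum fun H hH => ?_
        have hb := (Finset.mem_filter.mp hH).2
        have : 1 ≤ Real.exp (n * x / 80) * Real.exp (-l) ^ (nbhd H I).card := by
          rw [← Real.exp_nat_mul, ← Real.exp_add]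
          apply Real.one_le_exp
          have := mul_le_mul_of_nonneg_left hb.le hl0
          have e : l * (n * min x 1 / 80) = n * (l * min x 1) / 80 := by ring
          rw [e, hlm] at this
          nlinarith
        have hw := erW_nonneg h0 h1 H
        nlinarith
    _ ≤ ∑ H : SimpleGraph (Fin n),
          Real.exp (n * x / 80) * (erW p H * Real.exp (-l) ^ (nbhd H I).card) := by
        refine Finset.sum_le_sum_of_subset_of_nonneg (Finset.subset_univ _) fun H _ _ => ?_
        have hw := erW_nonneg h0 h1 H
        positivity
    _ ≤ Real.exp (n * x / 80) * Real.exp (-(x / 4)) ^ (n - I.card) := by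
        rw [← Finset.mul_sum]
        refine mul_le_mul_of_nonneg_left ?_ (Real.exp_pos _).le
        refine (mgf_bound h0 h1 ha0.le ha1 I).trans ?_
        have hpn : 0 ≤ 1 - p := by linarith
        have hqq : 0 ≤ 1 - Real.exp (-l) := by linarith
        refine pow_le_pow_left₀ (by positivity) ?_ _
        refine le_trans ?_ (base_bound hx0)
        have : (1 - p) ^ I.card ≤ Real.exp (-x) := by
          have h2 : 1 - p ≤ Real.exp (-p) := by linarith [Real.add_one_le_exp (-p)]
          calc (1 - p) ^ I.card ≤ Real.exp (-p) ^ I.card := pow_le_pow_left₀ hpn h2 _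
            _ = _ := by rw [← Real.exp_nat_mul, hx]; congr 1; ring
        have := mul_le_mul_of_nonneg_left this hqq
        linarith
    _ ≤ Real.exp (-(5 * Real.log n * I.card)) := by
        rw [← Real.exp_nat_mul, ← Real.exp_add]
        apply Real.exp_le_exp.mpr
        rw [Nat.cast_sub hcn]
        have h3 : 80 * Real.log n * I.card ≤ n * x := by
          rw [div_le_iff₀ hn0] at hp
          have := mul_le_mul_of_nonneg_right hp (Nat.cast_nonneg (α := ℝ) I.card)
          rw [hx]; nlinarith
        have h4 : (n / 2) * x ≤ ((n : ℝ) - I.card) * x :=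
          mul_le_mul_of_nonneg_right (by linarith) hx0
        have hlog : 0 ≤ Real.log n * I.card :=
          mul_nonneg (Real.log_natCast_nonneg n) (Nat.cast_nonneg _)
        nlinarith
    _ = _ := by
        have : (1 / (n : ℝ) ^ 5) = Real.exp (-(5 * Real.log n)) := by
          rw [Real.exp_neg, one_div]
          congr 1
          rw [show (5 : ℝ) = ((5 : ℕ) : ℝ) by norm_num, Real.exp_nat_mul, Real.exp_log hn0]
        rw [this, ← Real.exp_nat_mul]
        congr 1; ring

theorem sum_sets {n : ℕ} (hn : 2 ≤ n) :
    ∑ I ∈ (Finset.univ : Finset (Finset (Fin n))).erase ∅, (1 / (n : ℝ) ^ 5) ^ I.card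
      ≤ 1 / (n : ℝ) ^ 2 := by
  have hn2 : (2 : ℝ) ≤ n := by exact_mod_cast hn
  have hn0 : (0 : ℝ) < n := by positivity
  set t : ℝ := 1 / (n : ℝ) ^ 5 with ht
  have ht0 : 0 ≤ t := by positivity
  have h1 : ∑ I : Finset (Fin n), t ^ I.card = (t + 1) ^ n := by
    have := Fin.sum_pow_mul_eq_add_pow (n := n) t 1
    simpa using this
  have h2 := Finset.add_sum_erase Finset.univ (fun I : Finset (Fin n) => t ^ I.card)
    (Finset.mem_univ ∅)
  simp only [Finset.card_empty, pow_zero] at h2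
  rw [h1] at h2
  have h3 : (t + 1) ^ n ≤ Real.exp (n * t) := by
    rw [Real.exp_nat_mul]
    exact pow_le_pow_left₀ (by linarith) (Real.add_one_le_exp t) _
  have hnt : n * t = 1 / (n : ℝ) ^ 4 := by rw [ht]; field_simp
  have hsq : 4 ≤ (n : ℝ) ^ 2 := by nlinarith
  have hu : 1 / (n : ℝ) ^ 2 ≤ 1 / 4 := one_div_le_one_div_of_le (by norm_num) hsq
  have hu0 : 0 < 1 / (n : ℝ) ^ 2 := by positivity
  have h4 : 1 / (n : ℝ) ^ 4 = (1 / (n : ℝ) ^ 2) * (1 / (n : ℝ) ^ 2) := by field_simp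
  have h5 : (n : ℝ) * t ≤ 1 / (n : ℝ) ^ 2 / 4 := by rw [hnt, h4]; nlinarith
  have h6 := Real.abs_exp_sub_one_le (x := n * t)
    (by rw [abs_of_nonneg (by positivity)]; linarith)
  rw [abs_of_nonneg (by positivity : 0 ≤ (n : ℝ) * t)] at h6
  have h7 := (abs_le.mp h6).2
  linarith

theorem expander_of_good {n : ℕ} {p : ℝ} (G : SimpleGraph (Fin n)) (hp0 : 0 < p) (hnp : 2 ≤ n * p)
    (hgood : ∀ I : Finset (Fin n), I ≠ ∅ → (I.card : ℝ) ≤ n / 2 →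
      n * min (p * I.card) 1 / 80 ≤ ((nbhd G I).card : ℝ)) :
    (∀ h : ℝ, 1 ≤ h → h ≤ 1 / p → IsExpander G h ((n : ℝ) * p / 80)) ∧
    (∀ h : ℝ, 1 / p ≤ h → h ≤ (n : ℝ) / 2 → IsExpander G h ((n : ℝ) / (80 * h))) := by
  constructor
  · intro h _ hh I hI hIh
    have h1 : (I.card : ℝ) ≤ 1 / p := hIh.trans hh
    have h2 : (I.card : ℝ) ≤ n / 2 := by
      refine h1.trans ?_
      rw [div_le_div_iff₀ hp0 (by norm_num)]; linarith
    have h3 : p * I.card ≤ 1 := by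
      rw [le_div_iff₀ hp0] at h1; linarith
    have := hgood I hI.ne_empty h2
    rw [min_eq_left h3] at this
    linarith
  · intro h hh hn I hI hIh
    have hh0 : 0 < h := lt_of_lt_of_le (by positivity) hh
    refine le_trans ?_ (hgood I hI.ne_empty (hIh.trans hn))
    have h1 : (I.card : ℝ) / h ≤ min (p * I.card) 1 := by
      apply le_min
      · rw [div_le_iff₀ hh0]
        rw [div_le_iff₀ hp0] at hh
        nlinarith [Nat.cast_nonneg (α := ℝ) I.card]
      · rw [div_le_one hh0]; exact hIh
    have e : (n : ℝ) / (80 * h) * I.card = n * (I.card / h) / 80 := by field_simp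
    rw [e]
    have := mul_le_mul_of_nonneg_left h1 (Nat.cast_nonneg (α := ℝ) n)
    linarith

/-- expander properties of the stationary distribution `G_{n,p̂}` of
an edge-Markovian evolving graph. -/
theorem er_expander :
    ∃ c : ℝ, 0 < c ∧
      ∀ (n : ℕ) (phat : ℝ) (Ω : Type) [MeasurableSpace Ω] (μ : Measure Ω)
        [IsProbabilityMeasure μ] (G : Ω → SimpleGraph (Fin n)),
        2 ≤ n → c * Real.log n / n ≤ phat → phat ≤ 1 →
        IsErdosRenyi μ G phat →
        ENNReal.ofReal (1 - 1 / (n : ℝ) ^ 2) ≤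
          μ {ω |
            (∀ h : ℝ, 1 ≤ h → h ≤ 1 / phat →
              IsExpander (G ω) h ((n : ℝ) * phat / c)) ∧
            (∀ h : ℝ, 1 / phat ≤ h → h ≤ (n : ℝ) / 2 →
              IsExpander (G ω) h ((n : ℝ) / (c * h)))} := by
  classical
  refine ⟨80, by norm_num, ?_⟩
  intro n p Ω _ μ _ G hn hp hp1 hER
  have hn2 : (2 : ℝ) ≤ n := by exact_mod_cast hn
  have hn0 : (0 : ℝ) < n := by positivity
  have hlog : 1 / 2 ≤ Real.log n := by
    have h1 := Real.log_le_log (by norm_num) hn2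
    linarith [Real.log_two_gt_d9]
  have hnp : 2 ≤ n * p := by
    rw [div_le_iff₀ hn0] at hp
    nlinarith
  have hp0 : 0 < p := by
    by_contra h
    push Not at h
    nlinarith
  set S : Finset (Finset (Fin n)) := ((Finset.univ : Finset (Finset (Fin n))).erase ∅).filter
    (fun I => (I.card : ℝ) ≤ n / 2) with hS
  set B : Finset (Fin n) → Finset (SimpleGraph (Fin n)) := fun I => Finset.univ.filter
    (fun H : SimpleGraph (Fin n) => ((nbhd H I).card : ℝ) < n * min (p * I.card) 1 / 80) with hB
  set T : Set Ω := {ω |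
            (∀ h : ℝ, 1 ≤ h → h ≤ 1 / p →
              IsExpander (G ω) h ((n : ℝ) * p / 80)) ∧
            (∀ h : ℝ, 1 / p ≤ h → h ≤ (n : ℝ) / 2 →
              IsExpander (G ω) h ((n : ℝ) / (80 * h)))} with hT
  have hcov : Tᶜ ⊆ ⋃ I ∈ S, ⋃ H ∈ B I, {ω | G ω = H} := by
    intro ω hω
    by_contra hc
    apply hω
    refine expander_of_good (G ω) hp0 hnp ?_
    intro I hI hI2
    by_contra hlt
    push Not at hlt
    apply hc
    simp only [Set.mem_iUnion]
    refine ⟨I, by simp [hS, hI, hI2], G ω, by simp [hB, hlt], rfl⟩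
  have hbad : μ Tᶜ ≤ ENNReal.ofReal (1 / (n : ℝ) ^ 2) := by
    calc μ Tᶜ ≤ μ (⋃ I ∈ S, ⋃ H ∈ B I, {ω | G ω = H}) := measure_mono hcov
      _ ≤ ∑ I ∈ S, μ (⋃ H ∈ B I, {ω | G ω = H}) := measure_biUnion_finset_le _ _
      _ ≤ ∑ I ∈ S, ∑ H ∈ B I, μ {ω | G ω = H} :=
          Finset.sum_le_sum fun I _ => measure_biUnion_finset_le _ _
      _ = ∑ I ∈ S, ∑ H ∈ B I, ENNReal.ofReal (erW p H) :=
          Finset.sum_congr rfl fun I _ => Finset.sum_congr rfl fun H _ => hER H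
      _ = ENNReal.ofReal (∑ I ∈ S, ∑ H ∈ B I, erW p H) := by
          rw [ENNReal.ofReal_sum_of_nonneg]
          · refine Finset.sum_congr rfl fun I _ => ?_
            rw [ENNReal.ofReal_sum_of_nonneg]
            exact fun H _ => erW_nonneg hp0.le hp1 H
          · exact fun I _ => Finset.sum_nonneg fun H _ => erW_nonneg hp0.le hp1 H
      _ ≤ ENNReal.ofReal (1 / (n : ℝ) ^ 2) := by
          apply ENNReal.ofReal_le_ofReal
          refine le_trans ?_ (sum_sets hn)
          refine le_trans (Finset.sum_le_sum fun I hI =>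
            bad_bound hp0.le hp1 hn hp I (Finset.mem_filter.mp hI).2) ?_
          exact Finset.sum_le_sum_of_subset_of_nonneg (Finset.filter_subset _ _)
            (fun _ _ _ => by positivity)
  have h1 : (1 : ENNReal) ≤ μ T + μ Tᶜ := by
    rw [← measure_univ (μ := μ), ← Set.union_compl_self T]
    exact measure_union_le _ _
  rw [ENNReal.ofReal_sub _ (by positivity), ENNReal.ofReal_one]
  rw [tsub_le_iff_right]
  exact h1.trans (by gcongr)

end
end

section
/- There exist constants c, C > 0 such that the following holds. Let p̂ satisfy c·(log n)/n ≤ p̂ ≤ 1, and let (G_t)_{t∈ℕ} be a sequence of random graphs on [n] such that every G_t is distributed as G_{n,p̂} (as holds for a stationary edge-Markovian evolving graph with birth-rate p and death-rate q, where p̂ = p/(p+q)). Then with probability at least 1 − 1/n the flooding time of (G_t) is at most C · ( log n / log(n·p̂) + log log(n·p̂) ). -/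
open Finset MeasureTheory

noncomputable section

lemma sum_avoid {α : Type*} [DecidableEq α] (E F : Finset α) (hF : F ⊆ E) (p : ℝ) :
    ∑ S ∈ E.powerset, p ^ (#S) * (1 - p) ^ (#E - #S) * (if Disjoint S F then (1:ℝ) else 0)
      = (1 - p) ^ (#F) := by
  have h1 : ∑ S ∈ E.powerset, p ^ (#S) * (1 - p) ^ (#E - #S) *
      (if Disjoint S F then (1:ℝ) else 0)
      = ∑ S ∈ (E \ F).powerset, p ^ (#S) * (1 - p) ^ (#(E \ F) - #S) * (1 - p) ^ (#F) := by
    simp only [mul_ite, mul_one, mul_zero]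
    rw [← Finset.sum_filter]
    have : E.powerset.filter (fun S => Disjoint S F) = (E \ F).powerset := by
      ext S
      simp only [Finset.mem_filter, Finset.mem_powerset, Finset.subset_sdiff]
    rw [this]
    apply Finset.sum_congr rfl
    intro S hS
    have hS' := Finset.card_le_card (Finset.mem_powerset.1 hS)
    have h2 := Finset.card_sdiff_add_card_eq_card hF
    rw [mul_assoc, ← pow_add]
    congr 2
    omega
  rw [h1, ← Finset.sum_mul, Finset.sum_pow_mul_eq_add_pow]
  simp

def wgt (n : ℕ) (p : ℝ) (H : SimpleGraph (Fin n)) : ℝ :=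
  p ^ (Nat.card H.edgeSet) * (1 - p) ^ (n.choose 2 - Nat.card H.edgeSet)

lemma wgt_nonneg (n : ℕ) (p : ℝ) (h0 : 0 ≤ p) (h1 : p ≤ 1) (H : SimpleGraph (Fin n)) :
    0 ≤ wgt n p H := by
  unfold wgt
  have : 0 ≤ 1 - p := by linarith
  positivity

open Classical in
lemma sum_noadj {n : ℕ} (p : ℝ) (h0 : 0 ≤ p) (h1 : p ≤ 1) (I A : Finset (Fin n))
    (hIA : Disjoint I A) :
    ∑ H : SimpleGraph (Fin n), wgt n p H *
      (if ∀ v ∈ A, ¬ ∃ u ∈ I, H.Adj u v then (1:ℝ) else 0) ≤ ((1 - p) ^ (#I)) ^ (#A) := by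
  set E := (⊤ : SimpleGraph (Fin n)).edgeFinset with hE
  set F : Finset (Sym2 (Fin n)) := (I ×ˢ A).image (fun q => s(q.1, q.2)) with hF
  have hFE : F ⊆ E := by
    intro e he
    simp only [hF, Finset.mem_image, Finset.mem_product, Prod.exists] at he
    obtain ⟨u, v, ⟨hu, hv⟩, rfl⟩ := he
    rw [hE, SimpleGraph.mem_edgeFinset, SimpleGraph.mem_edgeSet]
    rintro rfl
    exact (Finset.disjoint_left.1 hIA hu hv)
  have hFc : #F = #I * #A := by
    rw [hF, Finset.card_image_of_injOn, Finset.card_product]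
    rintro ⟨a, b⟩ hab ⟨c, d⟩ hcd h
    simp only [Finset.coe_product, Set.mem_prod, Finset.mem_coe] at hab hcd
    simp only [Sym2.eq_iff] at h
    rcases h with ⟨rfl, rfl⟩ | ⟨rfl, rfl⟩
    · rfl
    · exact absurd hcd.2 (Finset.disjoint_left.1 hIA hab.1)
  have hEc : #E = n.choose 2 := by
    rw [hE, SimpleGraph.card_edgeFinset_top_eq_card_choose_two, Fintype.card_fin]
  rw [← pow_mul, ← hFc, ← sum_avoid E F hFE p]
  have h2 : ∀ H : SimpleGraph (Fin n), wgt n p H *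
      (if ∀ v ∈ A, ¬ ∃ u ∈ I, H.Adj u v then (1:ℝ) else 0) =
      (fun S : Finset (Sym2 (Fin n)) => p ^ (#S) * (1 - p) ^ (#E - #S) *
        (if Disjoint S F then (1:ℝ) else 0)) H.edgeFinset := by
    intro H
    have hc : Nat.card H.edgeSet = #H.edgeFinset := by
      rw [Nat.card_eq_fintype_card, SimpleGraph.edgeFinset_card]
    have hd : (∀ v ∈ A, ¬ ∃ u ∈ I, H.Adj u v) ↔ Disjoint H.edgeFinset F := by
      rw [Finset.disjoint_right]
      constructor
      · intro h e he
        simp only [hF, Finset.mem_image, Finset.mem_product, Prod.exists] at he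
        obtain ⟨u, v, ⟨hu, hv⟩, rfl⟩ := he
        rw [SimpleGraph.mem_edgeFinset, SimpleGraph.mem_edgeSet]
        exact fun ha => h v hv ⟨u, hu, ha⟩
      · rintro h v hv ⟨u, hu, ha⟩
        have := h (a := s(u, v)) (Finset.mem_image.2 ⟨(u, v), Finset.mem_product.2 ⟨hu, hv⟩, rfl⟩)
        rw [SimpleGraph.mem_edgeFinset, SimpleGraph.mem_edgeSet] at this
        exact this ha
    simp only [wgt, hc, hEc, hd]
  rw [Finset.sum_congr rfl (fun H _ => h2 H)]
  rw [← Finset.sum_image (s := Finset.univ) (g := fun H : SimpleGraph (Fin n) => H.edgeFinset)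
    (f := fun S : Finset (Sym2 (Fin n)) => p ^ (#S) * (1 - p) ^ (#E - #S) *
        (if Disjoint S F then (1:ℝ) else 0)) (fun H _ H' _ h => SimpleGraph.edgeFinset_inj.1 h)]
  apply Finset.sum_le_sum_of_subset_of_nonneg
  · intro S hS
    obtain ⟨H, -, rfl⟩ := Finset.mem_image.1 hS
    rw [Finset.mem_powerset, hE]
    exact SimpleGraph.edgeFinset_mono le_top
  · intro S _ _
    have : 0 ≤ 1 - p := by linarith
    positivity

open Classical in
lemma theta_nbhd {n : ℕ} (θ : ℝ) (H : SimpleGraph (Fin n)) (I : Finset (Fin n)) :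
    θ ^ (#(nbhd H I)) = ∑ A ∈ (Iᶜ).powerset, ((1 - θ) ^ (#A) * θ ^ (#(Iᶜ) - #A)) *
      (if ∀ v ∈ A, ¬ ∃ u ∈ I, H.Adj u v then (1:ℝ) else 0) := by
  have h1 : θ ^ (#(nbhd H I)) = ∏ v ∈ Iᶜ,
      ((1 - θ) * (if ¬ ∃ u ∈ I, H.Adj u v then (1:ℝ) else 0) + θ) := by
    have h3 : nbhd H I = (Iᶜ).filter (fun v => ∃ u ∈ I, H.Adj u v) := by
      ext v; simp [nbhd]
    rw [h3, ← Finset.prod_const, Finset.prod_filter]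
    apply Finset.prod_congr rfl
    intro v _
    by_cases h : ∃ u ∈ I, H.Adj u v
    · simp [h]
    · rw [if_neg h, if_pos h]; ring
  rw [h1, Finset.prod_add]
  apply Finset.sum_congr rfl
  intro A hA
  rw [Finset.prod_mul_distrib, Finset.prod_const, Finset.prod_const,
    Finset.card_sdiff_of_subset (Finset.mem_powerset.1 hA), Finset.prod_ite_zero]
  simp only [Finset.prod_const_one]
  ring

open Classical in
lemma expect_theta {n : ℕ} (p θ : ℝ) (h0 : 0 ≤ p) (h1 : p ≤ 1) (t0 : 0 ≤ θ) (t1 : θ ≤ 1)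
    (I : Finset (Fin n)) :
    ∑ H : SimpleGraph (Fin n), wgt n p H * θ ^ (#(nbhd H I)) ≤
      ((1 - θ) * (1 - p) ^ (#I) + θ) ^ (#(Iᶜ)) := by
  simp only [theta_nbhd, Finset.mul_sum]
  rw [Finset.sum_comm, ← Finset.sum_pow_mul_eq_add_pow]
  apply Finset.sum_le_sum
  intro A hA
  have h3 := sum_noadj p h0 h1 I A (by
    have := Finset.mem_powerset.1 hA
    exact (Finset.disjoint_of_subset_left this disjoint_compl_left).symm)
  have : 0 ≤ 1 - θ := by linarith
  calc _ = ((1 - θ) ^ (#A) * θ ^ (#(Iᶜ) - #A)) * ∑ H : SimpleGraph (Fin n), wgt n p H *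
      (if ∀ v ∈ A, ¬ ∃ u ∈ I, H.Adj u v then (1:ℝ) else 0) := by
        rw [Finset.mul_sum]
        apply Finset.sum_congr rfl
        intro H _
        ring
    _ ≤ ((1 - θ) ^ (#A) * θ ^ (#(Iᶜ) - #A)) * ((1 - p) ^ (#I)) ^ (#A) := by
        gcongr
    _ = _ := by rw [mul_pow]; ring

/-- Tail bound for the size of a neighborhood. -/
lemma tail_sum {n : ℕ} (p x : ℝ) (h0 : 0 < p) (h1 : p ≤ 1) (I : Finset (Fin n)) (hI : #I ≤ n) :
    ∑ H : SimpleGraph (Fin n), wgt n p H *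
      (by classical exact if ((#(nbhd H I) : ℕ) : ℝ) ≤ x then (1:ℝ) else 0) ≤
      Real.exp (x - 0.63 * (p * #I / (1 + p * #I)) * (n - #I)) := by
  classical
  set θ : ℝ := Real.exp (-1) with hθ
  have t0 : 0 < θ := Real.exp_pos _
  have t1 : θ ≤ 0.37 := by
    rw [hθ, Real.exp_neg]
    have := Real.exp_one_gt_d9
    rw [inv_le_comm₀ (Real.exp_pos _) (by norm_num)]
    linarith
  have hm : ∑ H : SimpleGraph (Fin n), wgt n p H *
      (by classical exact if ((#(nbhd H I) : ℕ) : ℝ) ≤ x then (1:ℝ) else 0) ≤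
      Real.exp x * ∑ H : SimpleGraph (Fin n), wgt n p H * θ ^ (#(nbhd H I)) := by
    rw [Finset.mul_sum]
    apply Finset.sum_le_sum
    intro H _
    have hw := wgt_nonneg n p h0.le h1 H
    rw [mul_left_comm]
    apply mul_le_mul_of_nonneg_left _ hw
    split_ifs with h
    · rw [hθ, ← Real.exp_nat_mul, ← Real.exp_add]
      apply Real.one_le_exp
      linarith
    · positivity
  refine hm.trans ?_
  have h4 := expect_theta p θ h0.le h1 t0.le (by linarith) I
  have hpi : 0 ≤ p * #I := by positivity
  have h5 : (1 - p) ^ (#I) ≤ 1 - p * #I / (1 + p * #I) := by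
    have e1 : (1 - p) ^ (#I) ≤ Real.exp (-(p * #I)) := by
      have : 1 - p ≤ Real.exp (-p) := by linarith [Real.add_one_le_exp (-p)]
      calc (1 - p) ^ (#I) ≤ (Real.exp (-p)) ^ (#I) := by
            apply pow_le_pow_left₀ (by linarith) this
        _ = _ := by rw [← Real.exp_nat_mul]; congr 1; ring
    have e2 : Real.exp (-(p * #I)) ≤ 1 / (1 + p * #I) := by
      rw [Real.exp_neg, ← one_div]
      apply one_div_le_one_div_of_le (by linarith)
      linarith [Real.add_one_le_exp (p * #I)]
    have e3 : 1 - p * #I / (1 + p * #I) = 1 / (1 + p * #I) := by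
      field_simp; ring
    linarith
  set π := p * #I / (1 + p * #I) with hπ
  have hπ0 : 0 ≤ π := by positivity
  have hc : ((#(Iᶜ) : ℕ) : ℝ) = n - #I := by
    rw [Finset.card_compl, Fintype.card_fin, Nat.cast_sub hI]
  have h6 : ((1 - θ) * (1 - p) ^ (#I) + θ) ^ (#(Iᶜ)) ≤ Real.exp (-(0.63 * π) * (n - #I)) := by
    have hq : 0 ≤ (1 - p) ^ (#I) := pow_nonneg (by linarith) _
    have : (1 - θ) * (1 - p) ^ (#I) + θ ≤ Real.exp (-(0.63 * π)) := by
      have := Real.add_one_le_exp (-(0.63 * π))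
      have : (1 - θ) * (1 - p) ^ (#I) ≤ (1 - θ) * (1 - π) :=
        mul_le_mul_of_nonneg_left h5 (by linarith)
      have : 0.63 * π ≤ (1 - θ) * π := mul_le_mul_of_nonneg_right (by linarith) hπ0
      linarith
    calc _ ≤ (Real.exp (-(0.63 * π))) ^ (#(Iᶜ)) := by
          apply pow_le_pow_left₀ _ this
          have := mul_nonneg (show 0 ≤ 1 - θ by linarith) hq
          linarith
      _ = _ := by rw [← Real.exp_nat_mul, hc]; congr 1; ring
  calc _ ≤ Real.exp x * Real.exp (-(0.63 * π) * (n - #I)) := by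
        gcongr; exact h4.trans h6
    _ = _ := by rw [← Real.exp_add]; congr 1; ring

/-- Tail bound for the random graph. -/
lemma tail_prob {n : ℕ} {Ω : Type} [MeasurableSpace Ω] (μ : Measure Ω)
    (G : Ω → SimpleGraph (Fin n)) (p : ℝ) (hG : IsErdosRenyi μ G p) (x : ℝ) (h0 : 0 < p)
    (h1 : p ≤ 1) (I : Finset (Fin n)) (hI : #I ≤ n) :
    μ {ω | ((#(nbhd (G ω) I) : ℕ) : ℝ) ≤ x} ≤
      ENNReal.ofReal (Real.exp (x - 0.63 * (p * #I / (1 + p * #I)) * (n - #I))) := by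
  classical
  have hsub : {ω | ((#(nbhd (G ω) I) : ℕ) : ℝ) ≤ x} ⊆
      ⋃ H ∈ (Finset.univ.filter fun H : SimpleGraph (Fin n) => ((#(nbhd H I) : ℕ) : ℝ) ≤ x),
        {ω | G ω = H} := by
    intro ω hω
    simp only [Set.mem_iUnion]
    exact ⟨G ω, by simpa using hω, rfl⟩
  refine (measure_mono hsub).trans ((measure_biUnion_finset_le _ _).trans ?_)
  have : ∀ H : SimpleGraph (Fin n), μ {ω | G ω = H} = ENNReal.ofReal (wgt n p H) := fun H => hG H
  simp only [this]
  rw [← ENNReal.ofReal_sum_of_nonneg (fun H _ => wgt_nonneg n p h0.le h1 H)]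
  apply ENNReal.ofReal_le_ofReal
  refine le_trans (le_of_eq ?_) (tail_sum p x h0 h1 I hI)
  rw [Finset.sum_filter]
  apply Finset.sum_congr rfl
  intro H _
  simp only [mul_ite, mul_one, mul_zero]

lemma nbhd_mono {n : ℕ} (G : SimpleGraph (Fin n)) {I J : Finset (Fin n)} (h : I ⊆ J) :
    I ∪ nbhd G I ⊆ J ∪ nbhd G J := by
  classical
  intro v hv
  simp only [nbhd, Finset.mem_union, Finset.mem_filter, Finset.mem_univ, true_and] at hv ⊢
  by_cases hJ : v ∈ J
  · exact Or.inl hJ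
  · rcases hv with hv | ⟨_, u, hu, ha⟩
    · exact Or.inl (h hv)
    · exact Or.inr ⟨hJ, u, h hu, ha⟩

lemma informed_mono {n : ℕ} (Gs : ℕ → SimpleGraph (Fin n)) (s : Fin n) (t : ℕ) :
    informed Gs s t ⊆ informed Gs s (t + 1) := Finset.subset_union_left

lemma informed_adj {n : ℕ} (Gs : ℕ → SimpleGraph (Fin n)) (s : Fin n) (t : ℕ) (u v : Fin n)
    (hu : u ∈ informed Gs s t) (h : (Gs t).Adj u v) : v ∈ informed Gs s (t + 1) := by
  classical
  simp only [informed, nbhd, Finset.mem_union, Finset.mem_filter, Finset.mem_univ, true_and]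
  by_cases hv : v ∈ informed Gs s t
  · exact Or.inl hv
  · exact Or.inr ⟨hv, u, hu, h⟩

lemma backward {n : ℕ} (Gs : ℕ → SimpleGraph (Fin n)) (s v : Fin n) (T : ℕ) :
    ∀ r, r ≤ T → ∀ u, u ∈ informed (fun j => Gs (T - 1 - j)) v r →
      u ∈ informed Gs s (T - r) → v ∈ informed Gs s T := by
  classical
  intro r
  induction r with
  | zero =>
    intro _ u hu hs
    simp only [informed, Finset.mem_singleton] at hu
    subst hu
    simpa using hs
  | succ r ih =>
    intro hr u hu hs
    have e : T - r = (T - (r + 1)) + 1 := by omega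
    have e2 : T - 1 - r = T - (r + 1) := by omega
    simp only [informed, nbhd, Finset.mem_union, Finset.mem_filter, Finset.mem_univ,
      true_and] at hu
    rcases hu with hu | ⟨_, w, hw, ha⟩
    · exact ih (by omega) u hu (e ▸ informed_mono Gs s _ hs)
    · refine ih (by omega) w hw ?_
      rw [e]
      rw [e2] at ha
      exact informed_adj Gs s _ u w hs ha.symm

/-- Good graphs. -/
def GoodG {n : ℕ} (p : ℝ) (k : ℕ) (G : SimpleGraph (Fin n)) : Prop :=
  (∀ I : Finset (Fin n), I.Nonempty → p * #I ≤ 1 → n * p * #I / 16 < (#(nbhd G I) : ℕ)) ∧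
  (∀ I : Finset (Fin n), #I = k → (n:ℝ) / 2 < (#(nbhd G I) : ℕ))

lemma card_step {n : ℕ} (G : SimpleGraph (Fin n)) {I J : Finset (Fin n)} (h : I ⊆ J) :
    #(nbhd G I) ≤ #(J ∪ nbhd G J) :=
  Finset.card_le_card (Finset.subset_union_right.trans (nbhd_mono G h))

lemma grow {n : ℕ} (p : ℝ) (k L : ℕ) (Gs : ℕ → SimpleGraph (Fin n)) (s : Fin n)
    (h0 : 0 < p) (h1 : p ≤ 1) (hk : (k : ℝ) ≤ n / 32) (hL : (n : ℝ) ≤ (n * p / 16) ^ L)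
    (hg : ∀ t < L + 1, GoodG p k (Gs t)) :
    (n : ℝ) / 2 < #(informed Gs s (L + 1)) := by
  have hn0 : (0:ℝ) ≤ n := Nat.cast_nonneg n
  have key : ∀ t, t ≤ L → (n * p / 16) ^ t ≤ #(informed Gs s t) ∨ k ≤ #(informed Gs s t) := by
    intro t
    induction t with
    | zero => intro _; left; simp [informed]
    | succ t ih =>
      intro ht
      have hG := hg t (by omega)
      by_cases hkt : k ≤ #(informed Gs s t)
      · exact Or.inr (hkt.trans (Finset.card_le_card (informed_mono Gs s t)))
      have ih' := (ih (by omega)).resolve_right hkt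
      have hne : (informed Gs s t).Nonempty := by
        have : ∀ t, s ∈ informed Gs s t := by
          intro t
          induction t with
          | zero => simp [informed]
          | succ t ih => exact informed_mono Gs s t ih
        exact ⟨s, this t⟩
      by_cases hp : p * #(informed Gs s t) ≤ 1
      · left
        have a1 := hG.1 _ hne hp
        have a2 : ((#(nbhd (Gs t) (informed Gs s t)) : ℕ) : ℝ) ≤ #(informed Gs s (t + 1)) := by
          exact_mod_cast card_step (Gs t) (subset_refl _)
        have a3 : (n * p / 16) ^ t * (n * p / 16) ≤
          #(informed Gs s t) * (n * p / 16) := by gcongr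
        rw [pow_succ]
        linarith
      · right
        push Not at hp
        have hfl := Nat.floor_le (show 0 ≤ 1 / p by positivity)
        have hfl2 := Nat.lt_floor_add_one (1 / p)
        set j := ⌊1 / p⌋₊ with hj
        have hj1 : 1 ≤ j := by
          rw [hj]; apply Nat.le_floor
          rw [Nat.cast_one, le_div_iff₀ h0]; linarith
        have hj1' : (1:ℝ) ≤ j := by exact_mod_cast hj1
        have hjle : j ≤ #(informed Gs s t) := by
          have : (j:ℝ) ≤ #(informed Gs s t) := by
            refine hfl.trans ?_
            rw [div_le_iff₀ h0]; linarith
          exact_mod_cast this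
        obtain ⟨I, hI, hIc⟩ := Finset.exists_subset_card_eq hjle
        have a1 := hG.1 I (Finset.card_pos.1 (by omega)) (by
          rw [hIc]; rw [le_div_iff₀ h0] at hfl; linarith)
        have a2 : ((#(nbhd (Gs t) I) : ℕ) : ℝ) ≤ #(informed Gs s (t + 1)) := by
          exact_mod_cast card_step (Gs t) hI
        rw [hIc] at a1
        have a4 : 1 ≤ 2 * (p * j) := by
          rw [div_lt_iff₀ h0] at hfl2
          nlinarith
        have a5 : (n:ℝ) * 1 ≤ n * (2 * (p * j)) := by gcongr
        have : (k : ℝ) ≤ #(informed Gs s (t + 1)) := by linarith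
        exact_mod_cast this
  have hkL : k ≤ #(informed Gs s L) := by
    rcases key L le_rfl with h | h
    · have : (k : ℝ) ≤ #(informed Gs s L) := by linarith
      exact_mod_cast this
    · exact h
  obtain ⟨I, hI, hIc⟩ := Finset.exists_subset_card_eq hkL
  have a1 := (hg L (by omega)).2 I hIc
  have a2 : ((#(nbhd (Gs L) I) : ℕ) : ℝ) ≤ #(informed Gs s (L + 1)) := by
    exact_mod_cast card_step (Gs L) hI
  linarith

lemma flood {n : ℕ} (p : ℝ) (k L : ℕ) (Gs : ℕ → SimpleGraph (Fin n))
    (h0 : 0 < p) (h1 : p ≤ 1) (hk : (k : ℝ) ≤ n / 32) (hL : (n : ℝ) ≤ (n * p / 16) ^ L)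
    (hg : ∀ t < 2 * (L + 1), GoodG p k (Gs t)) (s : Fin n) :
    informed Gs s (2 * (L + 1)) = Finset.univ := by
  rw [Finset.eq_univ_iff_forall]
  intro v
  have f1 := grow p k L Gs s h0 h1 hk hL (fun t ht => hg t (by omega))
  have f2 := grow p k L (fun j => Gs (2 * (L + 1) - 1 - j)) v h0 h1 hk hL
    (fun t ht => hg _ (by omega))
  have : ∃ u, u ∈ informed Gs s (L + 1) ∧
      u ∈ informed (fun j => Gs (2 * (L + 1) - 1 - j)) v (L + 1) := by
    by_contra hcon
    push Not at hcon
    have hd := Finset.disjoint_left.2 hcon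
    have hc := Finset.card_le_univ (informed Gs s (L + 1) ∪
      informed (fun j => Gs (2 * (L + 1) - 1 - j)) v (L + 1))
    rw [Finset.card_union_of_disjoint hd, Fintype.card_fin] at hc
    have hc' : ((#(informed Gs s (L + 1)) : ℕ) : ℝ) +
      #(informed (fun j => Gs (2 * (L + 1) - 1 - j)) v (L + 1)) ≤ n := by exact_mod_cast hc
    linarith
  obtain ⟨u, hu1, hu2⟩ := this
  refine backward Gs s v (2 * (L + 1)) (L + 1) (by omega) u hu2 ?_
  have : 2 * (L + 1) - (L + 1) = L + 1 := by omega
  rw [this]; exact hu1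

lemma bad_prob {n : ℕ} {Ω : Type} [MeasurableSpace Ω] (μ : Measure Ω)
    (G : Ω → SimpleGraph (Fin n)) (p : ℝ) (hG : IsErdosRenyi μ G p) (h0 : 0 < p)
    (h1 : p ≤ 1) (k : ℕ) (hn : 2 ≤ n) (hd : 10000 * Real.log n ≤ n * p)
    (hk1 : 19 ≤ p * k) (hk2 : p * k ≤ 20) (hl : 1 ≤ Real.log n) :
    μ {ω | ¬ GoodG p k (G ω)} ≤ ENNReal.ofReal (1 / (n:ℝ) ^ 2) := by
  classical
  have hn0 : (0:ℝ) < n := by positivity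
  have hnp : (n:ℝ) * p ≤ n := by nlinarith
  have hn2 : (2:ℝ) ≤ n := by exact_mod_cast hn
  set l := Real.log n with hldef
  have hexp : Real.exp l = n := Real.exp_log hn0
  set A := (Finset.univ : Finset (Finset (Fin n))).filter
    (fun I => I.Nonempty ∧ p * #I ≤ 1) with hA
  set B := Finset.powersetCard k (Finset.univ : Finset (Fin n)) with hB
  have hsub : {ω | ¬ GoodG p k (G ω)} ⊆
      (⋃ I ∈ A, {ω | ((#(nbhd (G ω) I) : ℕ) : ℝ) ≤ n * p * #I / 16}) ∪
      (⋃ I ∈ B, {ω | ((#(nbhd (G ω) I) : ℕ) : ℝ) ≤ (n:ℝ) / 2}) := by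
    intro ω hω
    by_contra hcon
    apply hω
    simp only [Set.mem_union, Set.mem_iUnion, not_or, not_exists, Set.mem_ofPred_eq, not_le] at hcon
    exact ⟨fun I hI hp => hcon.1 I (by simp [hA, hI, hp]),
      fun I hI => hcon.2 I (by simp [hB, hI])⟩
  have hle : ∀ I : Finset (Fin n), #I ≤ n := fun I => by
    simpa using Finset.card_le_univ I
  set y : ℝ := Real.exp (-(5 * l)) with hy
  have hy0 : 0 < y := Real.exp_pos _
  have hyn : y * n ^ 5 = 1 := by
    rw [hy, ← hexp, ← Real.exp_nat_mul, ← Real.exp_add]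
    simp
  have hA1 : ∀ I ∈ A, μ {ω | ((#(nbhd (G ω) I) : ℕ) : ℝ) ≤ n * p * #I / 16} ≤
      ENNReal.ofReal (y ^ (#I)) := by
    intro I hI
    simp only [hA, Finset.mem_filter, Finset.mem_univ, true_and] at hI
    refine (tail_prob μ G p hG _ h0 h1 I (hle I)).trans (ENNReal.ofReal_le_ofReal ?_)
    rw [hy, ← Real.exp_nat_mul]
    apply Real.exp_le_exp.2
    have hi : (0:ℝ) ≤ #I := Nat.cast_nonneg _
    set i : ℝ := ((#I : ℕ) : ℝ) with hidef
    have hpi : 0 ≤ p * i := by positivity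
    have b1 : p * i / 2 ≤ p * i / (1 + p * i) := by
      apply div_le_div_of_nonneg_left hpi (by linarith) (by linarith [hI.2])
    have b2 : (n:ℝ) / 2 ≤ n - i := by
      have : n * (p * i) ≤ n * 1 := by gcongr; exact hI.2
      have : (2:ℝ) * i ≤ (n * p) * i := by gcongr; linarith
      linarith
    have b3 : 0.63 * (p * i / 2) * (n / 2) ≤ 0.63 * (p * i / (1 + p * i)) * (n - i) := by
      gcongr
    have b4 : (10000 * l) * i ≤ (n * p) * i := by gcongr
    have b5 : 0 ≤ l * i := by positivity
    linarith
  have hAs : ∑ I ∈ A, y ^ (#I) ≤ 2 * (n * y) := by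
    have c1 : ∑ I ∈ A, y ^ (#I) + 1 ≤ (y + 1) ^ n := by
      have c2 := Finset.sum_pow_mul_eq_add_pow y 1 (Finset.univ : Finset (Fin n))
      simp only [one_pow, mul_one, Finset.card_univ, Fintype.card_fin] at c2
      rw [← c2]
      have hnot : (∅ : Finset (Fin n)) ∉ A := by simp [hA]
      have : ∑ I ∈ insert ∅ A, y ^ (#I) = ∑ I ∈ A, y ^ (#I) + 1 := by
        rw [Finset.sum_insert hnot]; simp [add_comm]
      rw [← this]
      apply Finset.sum_le_sum_of_subset_of_nonneg
      · intro I _; simp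
      · intro I _ _; positivity
    have c3 : (y + 1) ^ n ≤ Real.exp (n * y) := by
      rw [Real.exp_nat_mul]
      apply pow_le_pow_left₀ (by positivity) (Real.add_one_le_exp y)
    have c4 : n * y ≤ 1 := by
      have : (n:ℝ) ≤ n ^ 5 := le_self_pow₀ (by linarith) (by norm_num)
      nlinarith
    have c5 : Real.exp (n * y) ≤ 1 + 2 * (n * y) := by
      have hz : 0 ≤ n * y := by positivity
      have := Real.abs_exp_sub_one_le (x := n * y) (by rw [abs_of_nonneg hz]; exact c4)
      rw [abs_of_nonneg hz] at this
      have := (le_abs_self _).trans this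
      linarith
    linarith
  have hkn : (k:ℝ) * l ≤ 0.002 * n := by
    have e1 : (10000 * l) * k ≤ (n * p) * k := by gcongr
    have e2 : n * (p * k) ≤ n * 20 := by gcongr
    linarith
  have hB1 : ∀ I ∈ B, μ {ω | ((#(nbhd (G ω) I) : ℕ) : ℝ) ≤ (n:ℝ) / 2} ≤
      ENNReal.ofReal (Real.exp (-(0.08 * n))) := by
    intro I hI
    have hIk : #I = k := (Finset.mem_powersetCard.1 hI).2
    refine (tail_prob μ G p hG _ h0 h1 I (hle I)).trans (ENNReal.ofReal_le_ofReal ?_)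
    apply Real.exp_le_exp.2
    rw [hIk]
    have b1 : (0.95:ℝ) ≤ p * k / (1 + p * k) := by
      rw [le_div_iff₀ (by linarith)]; linarith
    have b2 : 0.99 * (n:ℝ) ≤ n - k := by
      have : (k:ℝ) * 1 ≤ k * l := by gcongr
      linarith
    have b3 : 0.63 * 0.95 * (0.99 * (n:ℝ)) ≤ 0.63 * (p * k / (1 + p * k)) * (n - k) := by
      gcongr
    linarith
  have hBs : ∑ I ∈ B, Real.exp (-(0.08 * n)) ≤ y := by
    rw [Finset.sum_const, nsmul_eq_mul, hB, Finset.card_powersetCard, Finset.card_univ,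
      Fintype.card_fin]
    have e1 : ((n.choose k : ℕ) : ℝ) ≤ Real.exp (k * l) := by
      rw [Real.exp_nat_mul, hexp]
      exact_mod_cast Nat.choose_le_pow n k
    calc _ ≤ Real.exp (k * l) * Real.exp (-(0.08 * n)) := by gcongr
      _ = Real.exp (k * l - 0.08 * n) := by rw [← Real.exp_add]; congr 1
      _ ≤ y := by
        rw [hy]; apply Real.exp_le_exp.2
        linarith
  refine (measure_mono hsub).trans ((measure_union_le _ _).trans ?_)
  have r1 : μ (⋃ I ∈ A, {ω | ((#(nbhd (G ω) I) : ℕ) : ℝ) ≤ n * p * #I / 16}) ≤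
      ENNReal.ofReal (2 * (n * y)) := by
    refine (measure_biUnion_finset_le _ _).trans ((Finset.sum_le_sum hA1).trans ?_)
    rw [← ENNReal.ofReal_sum_of_nonneg (fun I _ => by positivity)]
    exact ENNReal.ofReal_le_ofReal hAs
  have r2 : μ (⋃ I ∈ B, {ω | ((#(nbhd (G ω) I) : ℕ) : ℝ) ≤ (n:ℝ) / 2}) ≤
      ENNReal.ofReal y := by
    refine (measure_biUnion_finset_le _ _).trans ((Finset.sum_le_sum hB1).trans ?_)
    rw [← ENNReal.ofReal_sum_of_nonneg (fun I _ => by positivity)]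
    exact ENNReal.ofReal_le_ofReal hBs
  refine (add_le_add r1 r2).trans ?_
  rw [← ENNReal.ofReal_add (by positivity) hy0.le]
  apply ENNReal.ofReal_le_ofReal
  rw [le_div_iff₀ (by positivity)]
  have g1 : y * n ^ 3 * n ^ 2 = 1 := by rw [← hyn]; ring
  have hn4 : (4:ℝ) ≤ n ^ 2 := by nlinarith
  have g2 : y * n ^ 3 * 4 ≤ 1 := by rw [← g1]; gcongr
  have g3 : y * n ^ 2 * 2 ≤ y * n ^ 2 * n := by gcongr
  linarith

/-- upper bound on flooding time of stationary edge-MEG. -/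
theorem edge_flooding_ub :
    ∃ c C : ℝ, 0 < c ∧ 0 < C ∧
      ∀ (n : ℕ) (phat : ℝ) (Ω : Type) [MeasurableSpace Ω] (μ : Measure Ω)
        [IsProbabilityMeasure μ] (Gs : ℕ → Ω → SimpleGraph (Fin n)),
        2 ≤ n → c * Real.log n / n ≤ phat → phat ≤ 1 →
        (∀ t : ℕ, IsErdosRenyi μ (Gs t) phat) →
        ENNReal.ofReal (1 - 1 / (n : ℝ)) ≤
          μ {ω | ∃ T : ℕ,
            (T : ℝ) ≤ C * (Real.log n / Real.log ((n : ℝ) * phat) +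
              Real.log (Real.log ((n : ℝ) * phat))) ∧
            ∀ src : Fin n, informed (fun t => Gs t ω) src T = Finset.univ} := by
  refine ⟨10000, 8, by norm_num, by norm_num, ?_⟩
  intro n p Ω _ μ _ Gs hn hp h1 hER
  have hn2 : (2:ℝ) ≤ n := by exact_mod_cast hn
  have hn0 : (0:ℝ) < n := by linarith
  have hd : 10000 * Real.log n ≤ n * p := by
    rw [div_le_iff₀ hn0] at hp; linarith
  have hl2 : 0.69 ≤ Real.log n := by
    have := Real.log_le_log (by norm_num) hn2
    linarith [Real.log_two_gt_d9]
  have h0 : 0 < p := by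
    by_contra hcon
    push Not at hcon
    nlinarith
  have hnp : (n:ℝ) * p ≤ n := by nlinarith
  have hd' : 6900 ≤ n * p := by linarith
  have hl : 1 ≤ Real.log n := by
    rw [Real.le_log_iff_exp_le hn0]
    linarith [Real.exp_one_lt_d9]
  set l := Real.log n with hldef
  set d : ℝ := n * p with hddef
  -- the size threshold
  set k := ⌈19 / p⌉₊ with hk
  have hk1 : 19 ≤ p * k := by
    have := Nat.le_ceil (19 / p)
    rw [div_le_iff₀ h0] at this
    linarith
  have hk2 : p * k ≤ 20 := by
    have := Nat.ceil_lt_add_one (show 0 ≤ 19 / p by positivity)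
    have h3 : p * k ≤ p * (19 / p + 1) := by gcongr
    have h4 : p * (19 / p + 1) = 19 + p := by field_simp
    linarith
  have hk3 : (k:ℝ) ≤ n / 32 := by
    have e1 : 6900 * (k:ℝ) ≤ d * k := by gcongr
    have e2 : n * (p * k) ≤ n * 20 := by gcongr
    have e3 : d * k = n * (p * k) := by rw [hddef]; ring
    linarith
  have hb : Real.log d / 2 ≤ Real.log (d / 16) := by
    have e1 : Real.log d = Real.log (d / 16) + Real.log 16 := by
      rw [← Real.log_mul (by positivity) (by norm_num)]; congr 1; field_simp
    have e2 : Real.log 16 ≤ Real.log (d / 16) :=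
      Real.log_le_log (by norm_num) (by linarith)
    linarith
  have hld : 3 ≤ Real.log d := by
    rw [Real.le_log_iff_exp_le (by linarith)]
    have := Real.exp_one_lt_d9
    have h3 : Real.exp 3 = Real.exp 1 ^ 3 := by rw [← Real.exp_nat_mul]; norm_num
    have : Real.exp 1 ^ 3 ≤ 3 ^ 3 := pow_le_pow_left₀ (Real.exp_pos _).le (by linarith) 3
    rw [h3]; linarith
  have hlb : 0 < Real.log (d / 16) := by linarith
  set L := ⌈l / Real.log (d / 16)⌉₊ with hLdef
  have hL : (n:ℝ) ≤ (n * p / 16) ^ L := by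
    have := Nat.le_ceil (l / Real.log (d / 16))
    rw [div_le_iff₀ hlb] at this
    have h16 : 0 < d / 16 := by linarith
    rw [← Real.log_le_log_iff hn0 (by positivity), Real.log_pow]
    exact this
  have hldl : Real.log d ≤ l := Real.log_le_log (by linarith) hnp
  have hq1 : 1 ≤ l / Real.log d := by rw [le_div_iff₀ (by linarith)]; linarith
  have hLle : (L:ℝ) ≤ 2 * (l / Real.log d) + 1 := by
    have := Nat.ceil_lt_add_one (show 0 ≤ l / Real.log (d / 16) by positivity)
    have h3 : l / Real.log (d / 16) ≤ l / (Real.log d / 2) :=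
      div_le_div_of_nonneg_left (by linarith) (by linarith) hb
    have h4 : l / (Real.log d / 2) = 2 * (l / Real.log d) := by field_simp
    linarith
  have hT : ((2 * (L + 1) : ℕ) : ℝ) ≤ 8 * (l / Real.log d) := by
    push_cast; linarith
  have hTn : ((2 * (L + 1) : ℕ) : ℝ) ≤ n := by
    have : l / Real.log d ≤ l := div_le_self (by linarith) (by linarith)
    linarith
  have hll : 0 ≤ Real.log (Real.log d) := Real.log_nonneg (by linarith)
  set S := {ω | ∃ T : ℕ, (T : ℝ) ≤ 8 * (l / Real.log d + Real.log (Real.log d)) ∧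
            ∀ src : Fin n, informed (fun t => Gs t ω) src T = Finset.univ} with hS
  set Bd := ⋃ t ∈ Finset.range (2 * (L + 1)), {ω | ¬ GoodG p k (Gs t ω)} with hBd
  have hcov : (Set.univ : Set Ω) ⊆ S ∪ Bd := by
    intro ω _
    by_cases hω : ω ∈ Bd
    · exact Or.inr hω
    · left
      refine ⟨2 * (L + 1), by linarith, ?_⟩
      apply flood p k L (fun t => Gs t ω) h0 h1 hk3 hL
      intro t ht
      by_contra hng
      apply hω
      simp only [hBd, Set.mem_iUnion]
      exact ⟨t, Finset.mem_range.2 ht, hng⟩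
  have hBdle : μ Bd ≤ ENNReal.ofReal (1 / (n:ℝ)) := by
    refine (measure_biUnion_finset_le _ _).trans ((Finset.sum_le_sum (fun t _ =>
      bad_prob μ (Gs t) p (hER t) h0 h1 k hn hd hk1 hk2 hl)).trans ?_)
    rw [← ENNReal.ofReal_sum_of_nonneg (fun I _ => by positivity)]
    apply ENNReal.ofReal_le_ofReal
    rw [Finset.sum_const, nsmul_eq_mul, Finset.card_range]
    calc _ ≤ (n:ℝ) * (1 / (n:ℝ) ^ 2) := by gcongr
      _ = _ := by field_simp
  have hfin : 1 ≤ μ S + ENNReal.ofReal (1 / (n:ℝ)) := by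
    calc (1 : ENNReal) = μ Set.univ := measure_univ.symm
      _ ≤ μ (S ∪ Bd) := measure_mono hcov
      _ ≤ μ S + μ Bd := measure_union_le _ _
      _ ≤ _ := by gcongr
  rw [ENNReal.ofReal_sub _ (by positivity), ENNReal.ofReal_one]
  exact tsub_le_iff_right.2 hfin

end
end
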